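/- Let ϕ, φ, φ̂, m₁ be as in the context, and let ∂₂φ̂(0,η) denote the partial derivative of φ̂ with respect to its second variable, evaluated at the point (0,η). Then for each δ > 0 the integral ∫_{|η| ≥ δ} η^{−1} ∂₂φ̂(0,η) dη is absolutely convergent, and lim_{δ → 0⁺} ∫_{|η| ≥ δ} η^{−1} ∂₂φ̂(0,η) dη = −2 m₁. -/

import Mathlib

open MeasureTheory Real Filter Topology
open scoped ENNReal

noncomputable section

/-- Convolution on `ℝ²`: `(ϕ∗ϕ)(x) = ∫ ϕ(y) ϕ(x−y) dy`. -/
def conv2 (ϕ : ℝ × ℝ → ℝ) (x : ℝ × ℝ) : ℝ := ∫ y : ℝ × ℝ, ϕ y * ϕ (x - y)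

/-- The Fourier transform on `ℝ²`: `ĝ(ξ) = ∫ g(x) e^{−i x·ξ} dx`. -/
def ft2 (g : ℝ × ℝ → ℝ) (ξ : ℝ × ℝ) : ℂ :=
  ∫ x : ℝ × ℝ, (g x : ℂ) * Complex.exp (-Complex.I * ((x.1 : ℂ) * (ξ.1 : ℂ) + (x.2 : ℂ) * (ξ.2 : ℂ)))

/-- `f₁(x) = (x/π) ∫_{ℝ²} e^{ixη₁} (−i η₁ η₂²)/(η₁²+η₂²)² φ̂(η) dη` with `φ = ϕ∗ϕ`. -/
def f1 (ϕ : ℝ × ℝ → ℝ) (x : ℝ) : ℂ :=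
  ((x / π : ℝ) : ℂ) * ∫ η : ℝ × ℝ,
    Complex.exp (Complex.I * (x : ℂ) * (η.1 : ℂ)) *
      (-Complex.I * (η.1 : ℂ) * (η.2 : ℂ) ^ 2 / ((η.1 : ℂ) ^ 2 + (η.2 : ℂ) ^ 2) ^ 2) *
      ft2 (conv2 ϕ) η

/-- `f₂(x) = (x/π) ∫_{ℝ²} e^{ixη₁} (−i η₁ (η₁²−η₂²))/(η₁²+η₂²)² φ̂(η) dη` with `φ = ϕ∗ϕ`. -/
def f2 (ϕ : ℝ × ℝ → ℝ) (x : ℝ) : ℂ :=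
  ((x / π : ℝ) : ℂ) * ∫ η : ℝ × ℝ,
    Complex.exp (Complex.I * (x : ℂ) * (η.1 : ℂ)) *
      (-Complex.I * (η.1 : ℂ) * ((η.1 : ℂ) ^ 2 - (η.2 : ℂ) ^ 2) /
        ((η.1 : ℂ) ^ 2 + (η.2 : ℂ) ^ 2) ^ 2) *
      ft2 (conv2 ϕ) η

/-- `f₃ = f₁ − 1`. -/
def f3 (ϕ : ℝ × ℝ → ℝ) (x : ℝ) : ℂ := f1 ϕ x - 1

/-- `m₁ = ∫_{ℝ²} |x| (ϕ∗ϕ)(x) dx`. -/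
def m1 (ϕ : ℝ × ℝ → ℝ) : ℝ := ∫ x : ℝ × ℝ, Real.sqrt (x.1 ^ 2 + x.2 ^ 2) * conv2 ϕ x

/-- `m₂ = ∫_{ℝ²} |x|² (ϕ∗ϕ)(x) dx`. -/
def m2 (ϕ : ℝ × ℝ → ℝ) : ℝ := ∫ x : ℝ × ℝ, (x.1 ^ 2 + x.2 ^ 2) * conv2 ϕ x


/-!
On the line `ξ₁ = 0` the transform `φ̂` is the one-dimensional Fourier transform of the marginal
`g(t) = ∫ φ(x, t) dx`, which is even. Hence `t g(t)` has integral zero and its primitive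
`H(t) = ∫_t^∞ u g(u) du` is again smooth with compact support. Since `H' = -t g`, Fourier transform
gives `η⁻¹ ∂₂φ̂(0, η) = -Ĥ(η)` for `η ≠ 0`, so the principal value is an absolutely convergent
integral, and Fourier inversion evaluates it as `-2π H(0) = -π ∫ |t| g(t) dt = -π ∫ |x₂| φ(x) dx`.
By radiality the last integral is `2/π`, the mean of `|sin θ|`, times `∫ |x| φ(x) dx`.
-/

open scoped FourierTransform

section Radial

/-- Radial functions on the plane. The condition is spelled out in coordinates because the norm of
`ℝ × ℝ` is the sup norm. -/
def IsRadial {α : Type*} (φ : ℝ × ℝ → α) : Prop :=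
  ∀ x y : ℝ × ℝ, x.1 ^ 2 + x.2 ^ 2 = y.1 ^ 2 + y.2 ^ 2 → φ x = φ y

lemma convolution_eq_of_norm_eq {E F F' G : Type*} [NormedAddCommGroup E] [InnerProductSpace ℝ E]
    [FiniteDimensional ℝ E] [MeasurableSpace E] [BorelSpace E] [NormedAddCommGroup F]
    [NormedSpace ℝ F] [NormedAddCommGroup F'] [NormedSpace ℝ F'] [NormedAddCommGroup G]
    [NormedSpace ℝ G] {f : E → F} {g : E → F'} (hf : ∀ x y, ‖x‖ = ‖y‖ → f x = f y)
    (hg : ∀ x y, ‖x‖ = ‖y‖ → g x = g y) (L : F →L[ℝ] F' →L[ℝ] G) {x y : E} (hxy : ‖x‖ = ‖y‖) :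
    convolution f g L volume x = convolution f g L volume y := by
  let A : E ≃ₗᵢ[ℝ] E := Submodule.reflection (ℝ ∙ (x - y))ᗮ
  have hA : A x = y := Submodule.reflection_sub hxy
  rw [convolution_def, convolution_def,
    ← A.measurePreserving.integral_comp A.toHomeomorph.measurableEmbedding
      (fun t => L (f t) (g (y - t)))]
  refine integral_congr_ae (Eventually.of_forall fun t => ?_)
  simp only [hf _ _ (A.norm_map t), hg (y - A t) (x - t) (by rw [← hA, ← map_sub, A.norm_map])]

lemma conv2_eq_convolution (ϕ : ℝ × ℝ → ℝ) :
    conv2 ϕ = convolution ϕ ϕ (ContinuousLinearMap.mul ℝ ℝ) volume := by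
  ext x
  simp only [conv2, convolution_def, ContinuousLinearMap.mul_apply']

lemma conv2_eq_convolution_complex (ϕ : ℝ × ℝ → ℝ) (x : ℝ × ℝ) :
    conv2 ϕ x = convolution (ϕ ∘ Complex.equivRealProd) (ϕ ∘ Complex.equivRealProd)
      (ContinuousLinearMap.mul ℝ ℝ) volume (Complex.equivRealProd.symm x) := by
  rw [conv2, ← Complex.volume_preserving_equiv_real_prod.integral_comp
    Complex.measurableEquivRealProd.measurableEmbedding, convolution_def]
  rfl

lemma contDiff_conv2 {ϕ : ℝ × ℝ → ℝ} {n : ℕ∞} (hϕ : ContDiff ℝ n ϕ) (hsupp : HasCompactSupport ϕ) :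
    ContDiff ℝ n (conv2 ϕ) :=
  conv2_eq_convolution ϕ ▸ hsupp.contDiff_convolution_right _
    (hϕ.continuous.integrable_of_hasCompactSupport hsupp).locallyIntegrable hϕ

lemma hasCompactSupport_conv2 {ϕ : ℝ × ℝ → ℝ} (hsupp : HasCompactSupport ϕ) :
    HasCompactSupport (conv2 ϕ) :=
  conv2_eq_convolution ϕ ▸ hsupp.convolution _ hsupp

lemma IsRadial.conv2 {ϕ : ℝ × ℝ → ℝ} (hϕ : IsRadial ϕ) : IsRadial (conv2 ϕ) := by
  have hnorm (z w : ℂ) : ‖z‖ = ‖w‖ ↔ z.re ^ 2 + z.im ^ 2 = w.re ^ 2 + w.im ^ 2 := by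
    rw [← sq_eq_sq₀ (norm_nonneg z) (norm_nonneg w), Complex.sq_norm, Complex.sq_norm,
      Complex.normSq_apply, Complex.normSq_apply, sq, sq, sq, sq]
  have hϕ' (z w : ℂ) (h : ‖z‖ = ‖w‖) :
      (ϕ ∘ Complex.equivRealProd) z = (ϕ ∘ Complex.equivRealProd) w :=
    hϕ _ _ ((hnorm z w).mp h)
  intro x y hxy
  rw [conv2_eq_convolution_complex, conv2_eq_convolution_complex]
  exact convolution_eq_of_norm_eq hϕ' hϕ' _ ((hnorm _ _).mpr hxy)

lemma IsRadial.integral_homogeneous_mul {φ h : ℝ × ℝ → ℝ} (hφ : IsRadial φ) (k : ℕ)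
    (hh : ∀ r : ℝ, 0 < r → ∀ x, h (r • x) = r ^ k * h x) :
    ∫ x, h x * φ x =
      (∫ r in Set.Ioi (0 : ℝ), r ^ (k + 1) * φ (r, 0)) *
        ∫ θ in Set.Ioo (-π) π, h (cos θ, sin θ) := by
  rw [← integral_comp_polarCoord_symm, ← setIntegral_prod_mul]
  refine setIntegral_congr_fun polarCoord.open_target.measurableSet ?_
  rintro ⟨r, θ⟩ ⟨hr, -⟩
  have hφr : φ (r * cos θ, r * sin θ) = φ (r, 0) :=
    hφ _ _ (by linear_combination r ^ 2 * cos_sq_add_sin_sq θ)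
  have hhr : h (r * cos θ, r * sin θ) = r ^ k * h (cos θ, sin θ) := hh r hr (cos θ, sin θ)
  simp only [polarCoord_symm_apply, hφr, hhr, smul_eq_mul]
  ring

lemma integral_abs_sin_Ioo : ∫ θ in Set.Ioo (-π) π, |sin θ| = 4 := by
  have hint (a b : ℝ) : IntervalIntegrable (fun θ => |sin θ|) volume a b :=
    (continuous_sin.abs).intervalIntegrable a b
  have hright : ∫ θ in (0 : ℝ)..π, |sin θ| = 2 := by
    rw [intervalIntegral.integral_congr (g := sin), integral_sin, cos_zero, cos_pi]
    · norm_num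
    · intro θ hθ
      rw [Set.uIcc_of_le pi_pos.le] at hθ
      exact abs_of_nonneg (sin_nonneg_of_mem_Icc hθ)
  have hleft : ∫ θ in (-π)..0, |sin θ| = ∫ θ in (0 : ℝ)..π, |sin θ| := by
    simpa using (intervalIntegral.integral_comp_neg (a := 0) (b := π) fun θ => |sin θ|).symm
  rw [← integral_Ioc_eq_integral_Ioo, ← intervalIntegral.integral_of_le (by linarith [pi_pos]),
    ← intervalIntegral.integral_add_adjacent_intervals (hint _ 0) (hint _ _), hleft, hright]
  norm_num

lemma IsRadial.pi_mul_integral_abs_snd_mul {φ : ℝ × ℝ → ℝ} (hφ : IsRadial φ) :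
    π * ∫ x, |x.2| * φ x = 2 * ∫ x : ℝ × ℝ, √(x.1 ^ 2 + x.2 ^ 2) * φ x := by
  rw [hφ.integral_homogeneous_mul (h := fun x => |x.2|) 1,
    hφ.integral_homogeneous_mul (h := fun x => √(x.1 ^ 2 + x.2 ^ 2)) 1]
  · simp only [cos_sq_add_sin_sq, sqrt_one, integral_abs_sin_Ioo, setIntegral_const,
      volume_real_Ioo_of_le (neg_le_self pi_pos.le), smul_eq_mul]
    ring
  · intro r hr x
    rw [Prod.smul_fst, Prod.smul_snd, smul_eq_mul, smul_eq_mul, mul_pow, mul_pow, ← mul_add,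
      sqrt_mul (sq_nonneg r), sqrt_sq hr.le, pow_one]
  · intro r hr x
    rw [Prod.smul_snd, smul_eq_mul, abs_mul, abs_of_pos hr, pow_one]

end Radial

section TailIntegral

variable {E : Type*} [NormedAddCommGroup E] [NormedSpace ℝ E] {f : ℝ → E}

/-- The decaying primitive `t ↦ ∫_t^∞ f` of `-f`. -/
def tailIntegral (f : ℝ → E) (t : ℝ) : E := ∫ u in Set.Ioi t, f u

lemma hasDerivAt_tailIntegral [CompleteSpace E] (hf : Continuous f) (hfi : Integrable f) (t : ℝ) :
    HasDerivAt (tailIntegral f) (-f t) t := by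
  have htail : tailIntegral f = fun s => tailIntegral f 0 - ∫ u in 0..s, f u := by
    ext s
    rw [← intervalIntegral.integral_Ioi_sub_Ioi' hfi.integrableOn hfi.integrableOn, tailIntegral,
      tailIntegral, sub_sub_cancel]
  rw [htail]
  exact (hf.integral_hasStrictDerivAt 0 t).hasDerivAt.const_sub _

lemma contDiff_tailIntegral [CompleteSpace E] (hf : ContDiff ℝ (⊤ : ℕ∞) f) (hfi : Integrable f) :
    ContDiff ℝ (⊤ : ℕ∞) (tailIntegral f) := by
  have hderiv := hasDerivAt_tailIntegral hf.continuous hfi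
  rw [contDiff_infty_iff_deriv, deriv_eq hderiv]
  exact ⟨fun t => (hderiv t).differentiableAt, hf.neg⟩

lemma hasCompactSupport_tailIntegral (hf : HasCompactSupport f) (h0 : ∫ u, f u = 0) :
    HasCompactSupport (tailIntegral f) := by
  rw [hasCompactSupport_iff_eventuallyEq, coclosedCompact_eq_cocompact,
    cocompact_eq_atBot_atTop, EventuallyEq, eventually_sup] at hf ⊢
  refine ⟨(eventually_forall_le_atBot.mpr hf.1).mono fun t ht => ?_,
    (eventually_forall_ge_atTop.mpr hf.2).mono fun t ht => ?_⟩
  · exact (setIntegral_eq_integral_of_forall_compl_eq_zero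
      fun u hu => ht u (not_lt.mp hu)).trans h0
  · exact setIntegral_eq_zero_of_forall_eq_zero fun u hu => ht u (le_of_lt hu)

lemma two_smul_integral_Ioi_of_even (hfi : Integrable f) (hf : Function.Even f) :
    (2 : ℝ) • ∫ t in Set.Ioi 0, f t = ∫ t, f t := by
  have hIic : ∫ t in Set.Iic 0, f t = ∫ t in Set.Ioi 0, f t := by
    simpa only [hf _, neg_zero] using integral_comp_neg_Iic (0 : ℝ) f
  rw [← integral_add_compl (measurableSet_Iic (a := (0 : ℝ))) hfi, Set.compl_Iic, hIic, two_smul]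

lemma two_smul_tailIntegral_smul_zero_of_even (hfi : Integrable fun t : ℝ => |t| • f t)
    (hf : Function.Even f) :
    (2 : ℝ) • tailIntegral (fun t : ℝ => t • f t) 0 = ∫ t, |t| • f t := by
  have habs : ∫ t in Set.Ioi (0 : ℝ), t • f t = ∫ t in Set.Ioi (0 : ℝ), |t| • f t :=
    setIntegral_congr_fun measurableSet_Ioi fun t ht => by
      simp only [abs_of_pos (Set.mem_Ioi.mp ht)]
  rw [tailIntegral, habs, two_smul_integral_Ioi_of_even hfi fun t => by rw [hf, abs_neg]]

lemma integral_eq_zero_of_odd (hf : Function.Odd f) : ∫ t, f t = 0 := by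
  have : IsAddTorsionFree E := .of_isTorsionFree ℝ E
  have hneg := integral_neg_eq_self f volume
  simp only [hf _, integral_neg] at hneg
  exact self_eq_neg.mp hneg.symm

end TailIntegral

section Fourier

variable {E : Type*} [NormedAddCommGroup E] [NormedSpace ℂ E]

lemma integral_fourier_eq [CompleteSpace E] {H : ℝ → E} (hH : ContinuousAt H 0)
    (hHi : Integrable H) (hFHi : Integrable (𝓕 H)) : ∫ ξ, 𝓕 H ξ = H 0 := by
  have hinv := hHi.fourierInv_fourier_eq hFHi hH
  rw [Real.fourierInv_eq'] at hinv
  simpa using hinv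

lemma deriv_fourier_of_hasDerivAt_neg_smul {g H : ℝ → E} (hg : Integrable g)
    (hxg : Integrable fun t : ℝ => t • g t) (hH : Integrable H)
    (hderiv : ∀ t, HasDerivAt H (-(t • g t)) t) (ξ : ℝ) :
    deriv (𝓕 g) ξ = -(4 * π ^ 2 * ξ) • 𝓕 H ξ := by
  have hderivH : deriv H = fun t => -(t • g t) := deriv_eq hderiv
  have hintegrand : (fun t : ℝ => (-2 * π * Complex.I * t) • g t) =
      (2 * π * Complex.I : ℂ) • deriv H := by
    ext t
    rw [hderivH, Pi.smul_apply, ← Complex.coe_smul, ← neg_smul, smul_smul]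
    congr 1
    ring
  have hsmul : 𝓕 ((2 * π * Complex.I : ℂ) • deriv H) = (2 * π * Complex.I : ℂ) • 𝓕 (deriv H) :=
    VectorFourier.fourierIntegral_const_smul 𝐞 volume (innerₗ ℝ) _ _
  rw [Real.deriv_fourier hg hxg, hintegrand, hsmul,
    Real.fourier_deriv hH (fun t => (hderiv t).differentiableAt) (hderivH ▸ hxg.neg),
    Pi.smul_apply, smul_smul, ← Complex.coe_smul]
  congr 1
  push_cast
  linear_combination (4 * π ^ 2 * ξ : ℂ) * Complex.I_sq

theorem integrable_and_integral_inv_smul_deriv_fourier [CompleteSpace E] {g : ℝ → E}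
    (hg : ContDiff ℝ (⊤ : ℕ∞) g) (hsupp : HasCompactSupport g) (heven : Function.Even g) :
    Integrable (fun ξ : ℝ => ξ⁻¹ • deriv (𝓕 g) ξ) ∧
      ∫ ξ : ℝ, ξ⁻¹ • deriv (𝓕 g) ξ = -(2 * π ^ 2) • ∫ t, |t| • g t := by
  have hf : ContDiff ℝ (⊤ : ℕ∞) fun t : ℝ => t • g t := contDiff_id.smul hg
  have hfsupp : HasCompactSupport fun t : ℝ => t • g t := hsupp.smul_left
  have hfi := hf.continuous.integrable_of_hasCompactSupport hfsupp (μ := volume)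
  let H : ℝ → E := tailIntegral fun t : ℝ => t • g t
  have hH : ContDiff ℝ (⊤ : ℕ∞) H := contDiff_tailIntegral hf hfi
  have hHsupp : HasCompactSupport H := hasCompactSupport_tailIntegral hfsupp
    (integral_eq_zero_of_odd fun t => by rw [heven, neg_smul])
  have hHi : Integrable H := hH.continuous.integrable_of_hasCompactSupport hHsupp
  have hFHi : Integrable (𝓕 H) := (𝓕 (hHsupp.toSchwartzMap hH)).integrable
  have hae : (fun ξ => -(4 * π ^ 2) • 𝓕 H ξ) =ᵐ[volume] fun ξ => ξ⁻¹ • deriv (𝓕 g) ξ := by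
    filter_upwards [Measure.ae_ne volume (0 : ℝ)] with ξ hξ
    rw [deriv_fourier_of_hasDerivAt_neg_smul
      (hg.continuous.integrable_of_hasCompactSupport hsupp) hfi hHi
      (hasDerivAt_tailIntegral hf.continuous hfi), smul_smul]
    congr 1
    field_simp
  refine ⟨(hFHi.smul _).congr hae, ?_⟩
  rw [← integral_congr_ae hae, integral_smul,
    integral_fourier_eq hH.continuous.continuousAt hHi hFHi,
    ← two_smul_tailIntegral_smul_zero_of_even
      ((continuous_abs.smul hg.continuous).integrable_of_hasCompactSupport hsupp.smul_left) heven,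
    smul_smul]
  congr 1
  ring

theorem integrable_and_integral_inv_smul_deriv_fourier_comp_div_two_pi [CompleteSpace E]
    {g : ℝ → E} (hg : ContDiff ℝ (⊤ : ℕ∞) g) (hsupp : HasCompactSupport g)
    (heven : Function.Even g) :
    Integrable (fun η : ℝ => η⁻¹ • deriv (fun t => 𝓕 g (t / (2 * π))) η) ∧
      ∫ η : ℝ, η⁻¹ • deriv (fun t => 𝓕 g (t / (2 * π))) η = -π • ∫ t, |t| • g t := by
  obtain ⟨hint, hval⟩ := integrable_and_integral_inv_smul_deriv_fourier hg hsupp heven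
  have hscale : (fun η : ℝ => η⁻¹ • deriv (fun t => 𝓕 g (t / (2 * π))) η) =
      fun η => ((2 * π)⁻¹ ^ 2) • ((η / (2 * π))⁻¹ • deriv (𝓕 g) (η / (2 * π))) := by
    ext η
    simp only [div_eq_inv_mul, deriv_comp_mul_left, smul_smul]
    congr 1
    field_simp
  rw [hscale]
  refine ⟨(hint.comp_div two_pi_pos.ne').smul _, ?_⟩
  rw [integral_smul, Measure.integral_comp_div (fun ξ => ξ⁻¹ • deriv (𝓕 g) ξ), hval,
    abs_of_pos two_pi_pos, smul_smul, smul_smul]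
  congr 1
  field_simp

end Fourier

section Marginal

/-- The marginal of a function on a product, obtained by integrating out the first variable. -/
def sndMarginal {X Y E : Type*} [MeasureSpace X] [NormedAddCommGroup E] [NormedSpace ℝ E]
    (φ : X × Y → E) (y : Y) : E := ∫ x, φ (x, y)

lemma integral_smul_sndMarginal {𝕜 X Y E : Type*} [MeasureSpace X] [MeasureSpace Y]
    [SFinite (volume : Measure X)] [SFinite (volume : Measure Y)] [NormedAddCommGroup E]
    [NormedSpace ℝ E] [NormedField 𝕜] [NormedSpace 𝕜 E] [SMulCommClass ℝ 𝕜 E] {w : Y → 𝕜}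
    {φ : X × Y → E} (h : Integrable fun x : X × Y => w x.2 • φ x) :
    ∫ y, w y • sndMarginal φ y = ∫ x : X × Y, w x.2 • φ x := by
  rw [Measure.volume_eq_prod, integral_prod_symm _ h]
  simp only [sndMarginal, integral_smul]

lemma hasCompactSupport_sndMarginal {X Y E : Type*} [MeasureSpace X] [TopologicalSpace X]
    [TopologicalSpace Y] [R1Space Y] [NormedAddCommGroup E] [NormedSpace ℝ E] {φ : X × Y → E}
    (hφ : HasCompactSupport φ) : HasCompactSupport (sndMarginal φ) := by
  refine .intro (hφ.isCompact.image continuous_snd) fun y hy => ?_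
  refine integral_eq_zero_of_ae (Eventually.of_forall fun x => ?_)
  exact image_eq_zero_of_notMem_tsupport fun hx => hy ⟨(x, y), hx, rfl⟩

lemma contDiff_sndMarginal {X Y E : Type*} [NormedAddCommGroup X] [NormedSpace ℝ X]
    [MeasureSpace X] [BorelSpace X] [IsLocallyFiniteMeasure (volume : Measure X)]
    [NormedAddCommGroup Y] [NormedSpace ℝ Y] [NormedAddCommGroup E] [NormedSpace ℝ E] {n : ℕ∞}
    {φ : X × Y → E} (hφ : ContDiff ℝ n φ) (hsupp : HasCompactSupport φ) :
    ContDiff ℝ n (sndMarginal φ) := by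
  -- The marginal at `y` is the convolution of `1` with `x ↦ φ (-x, y)`, evaluated at `0`.
  have hconv := contDiffOn_convolution_right_with_param (𝕜 := ℝ) (μ := (volume : Measure X))
    (f := fun _ : X => (1 : ℝ)) (g := fun (y : Y) (x : X) => φ (-x, y)) (n := n)
    (ContinuousLinearMap.lsmul ℝ ℝ) isOpen_univ
    (hsupp.isCompact.image (f := fun p : X × Y => -p.1) (by fun_prop))
    (fun y x _ hx => image_eq_zero_of_notMem_tsupport fun hmem => hx ⟨(-x, y), hmem, neg_neg x⟩)
    (locallyIntegrable_const _)
    (hφ.comp (contDiff_snd.neg.prodMk contDiff_fst)).contDiffOn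
  rw [Set.univ_prod_univ, contDiffOn_univ] at hconv
  convert hconv.comp (contDiff_id.prodMk (contDiff_const (c := (0 : X)))) using 1
  ext y
  simp [convolution_def, sndMarginal]

lemma ft2_zero_left {φ : ℝ × ℝ → ℝ} (hφ : Integrable φ) (t : ℝ) :
    ft2 φ (0, t) = 𝓕 (sndMarginal fun x => (φ x : ℂ)) (t / (2 * π)) := by
  have hint : Integrable fun x : ℝ × ℝ =>
      Complex.exp ((-2 * π * x.2 * (t / (2 * π)) : ℝ) * Complex.I) • (φ x : ℂ) := by
    refine hφ.ofReal.bdd_mul (c := 1) (by fun_prop) (Eventually.of_forall fun x => ?_)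
    rw [Complex.norm_exp_ofReal_mul_I]
  rw [Real.fourier_real_eq_integral_exp_smul, ft2, integral_smul_sndMarginal
    (w := fun y : ℝ => Complex.exp ((-2 * π * y * (t / (2 * π)) : ℝ) * Complex.I)) hint]
  congr 1
  ext x
  rw [smul_eq_mul, mul_comm]
  congr 2
  push_cast
  field_simp
  ring

end Marginal

lemma aecover_le_norm {E : Type*} [NormedAddCommGroup E] [MeasurableSpace E]
    [OpensMeasurableSpace E] (μ : Measure E) [NullSingletonClass μ] :
    AECover μ (𝓝[>] (0 : ℝ)) fun δ => {x : E | δ ≤ ‖x‖} where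
  ae_eventually_mem := by
    filter_upwards [Measure.ae_ne μ (0 : E)] with x hx
    exact mem_nhdsWithin_of_mem_nhds (Iic_mem_nhds (norm_pos_iff.mpr hx))
  measurableSet δ := measurableSet_le measurable_const measurable_norm

theorem statement10_general {φ : ℝ × ℝ → ℝ} (hsmooth : ContDiff ℝ (⊤ : ℕ∞) φ)
    (hsupp : HasCompactSupport φ) (hradial : IsRadial φ) :
    Integrable (fun η : ℝ => (η : ℂ)⁻¹ * deriv (fun t : ℝ => ft2 φ (0, t)) η) ∧
      ∫ η : ℝ, (η : ℂ)⁻¹ * deriv (fun t : ℝ => ft2 φ (0, t)) η =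
        ((-2 * ∫ x : ℝ × ℝ, √(x.1 ^ 2 + x.2 ^ 2) * φ x : ℝ) : ℂ) := by
  have hφi : Integrable φ := hsmooth.continuous.integrable_of_hasCompactSupport hsupp
  have hsmoothC : ContDiff ℝ (⊤ : ℕ∞) fun x => (φ x : ℂ) := Complex.ofRealCLM.contDiff.comp hsmooth
  have hsuppC : HasCompactSupport fun x => (φ x : ℂ) := hsupp.comp_left Complex.ofReal_zero
  have heven : Function.Even (sndMarginal fun x => (φ x : ℂ)) := fun t =>
    integral_congr_ae <| Eventually.of_forall fun x =>
      congrArg Complex.ofReal (hradial (x, -t) (x, t) (by simp only [neg_sq]))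
  have hmoment : ∫ t : ℝ, |t| • sndMarginal (fun x => (φ x : ℂ)) t =
      ((∫ x : ℝ × ℝ, |x.2| * φ x : ℝ) : ℂ) := by
    rw [integral_smul_sndMarginal, ← integral_complex_ofReal]
    · simp only [Complex.real_smul, Complex.ofReal_mul]
    · exact ((continuous_snd.abs).smul hsmoothC.continuous).integrable_of_hasCompactSupport
        hsuppC.smul_left
  have hslice : (fun t => ft2 φ (0, t)) =
      fun t => 𝓕 (sndMarginal fun x => (φ x : ℂ)) (t / (2 * π)) :=
    funext (ft2_zero_left hφi)
  have hmain := integrable_and_integral_inv_smul_deriv_fourier_comp_div_two_pi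
    (contDiff_sndMarginal hsmoothC hsuppC) (hasCompactSupport_sndMarginal hsuppC) heven
  rw [← hslice, hmoment, Complex.real_smul, ← Complex.ofReal_mul, neg_mul,
    hradial.pi_mul_integral_abs_snd_mul, ← neg_mul] at hmain
  simpa only [Complex.real_smul, Complex.ofReal_inv] using hmain

/-- The principal value `p.v. ∫_ℝ η⁻¹ ∂₂φ̂(0,η) dη = −2 m₁`,
where `∂₂φ̂` is the partial derivative of `φ̂` in its second variable. -/
theorem statement10 (ϕ : ℝ × ℝ → ℝ)
    (hsmooth : ContDiff ℝ (⊤ : ℕ∞) ϕ)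
    (hsupp : HasCompactSupport ϕ)
    (hradial : ∀ x y : ℝ × ℝ, x.1 ^ 2 + x.2 ^ 2 = y.1 ^ 2 + y.2 ^ 2 → ϕ x = ϕ y)
    (hnorm : (∫ x : ℝ × ℝ, ϕ x) = 1) :
    (∀ δ : ℝ, 0 < δ →
      IntegrableOn
        (fun η : ℝ => (η : ℂ)⁻¹ * deriv (fun t : ℝ => ft2 (conv2 ϕ) (0, t)) η)
        {η : ℝ | δ ≤ |η|} volume) ∧
    Filter.Tendsto
      (fun δ : ℝ =>
        ∫ η in {η : ℝ | δ ≤ |η|}, (η : ℂ)⁻¹ * deriv (fun t : ℝ => ft2 (conv2 ϕ) (0, t)) η)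
      (nhdsWithin 0 (Set.Ioi 0)) (nhds ((-2 * m1 ϕ : ℝ) : ℂ)) := by
  obtain ⟨hint, hval⟩ := statement10_general (contDiff_conv2 hsmooth hsupp)
    (hasCompactSupport_conv2 hsupp) (IsRadial.conv2 hradial)
  exact ⟨fun δ _ => hint.integrableOn,
    hval ▸ (aecover_le_norm volume).integral_tendsto_of_countably_generated hint⟩
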